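/- As α → 0⁺, h(α) ~ √( (1/π)·log(1/α) ), i.e. the ratio h(α) / √( log(1/α)/π ) tends to 1 as α → 0⁺. -/

import Mathlib

/-!
Put `q = Φ⁻¹(1 - α)`, so that `q → ∞` and `1 - Φ q = α`. Mills' asymptotic `1 - Φ x ~ φ x / x`
turns `h(α) = φ q / (α √(2π))` into `h(α) ~ q / √(2π)`. The logarithm of the same asymptotic is
`log (1 / (1 - Φ x)) ~ x² / 2`, hence `√(log (1 / α) / π) ~ q / √(2π)` as well.
Mills' asymptotic itself is L'Hôpital's rule: since `φ' = -x φ`, the derivative of `φ x / x` is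
`-φ x (1 + x⁻²)`, while that of `1 - Φ` is `-φ`.
-/

open MeasureTheory Real

/-- The standard normal cumulative distribution function Φ. -/
noncomputable def stdNormalCDF (x : ℝ) : ℝ :=
  ∫ t in Set.Iic x, Real.exp (-t ^ 2 / 2) / Real.sqrt (2 * Real.pi)

/-- The standard normal density φ. -/
noncomputable def stdNormalPDF (x : ℝ) : ℝ :=
  Real.exp (-x ^ 2 / 2) / Real.sqrt (2 * Real.pi)

/-- The standard normal quantile function Φ⁻¹. -/
noncomputable def stdNormalQuantile (u : ℝ) : ℝ :=
  sInf {x : ℝ | u ≤ stdNormalCDF x}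

/-- h(α) := φ(Φ⁻¹(1-α)) / (α √(2π)). -/
noncomputable def hFun (a : ℝ) : ℝ :=
  stdNormalPDF (stdNormalQuantile (1 - a)) / (a * Real.sqrt (2 * Real.pi))

open Filter Set Topology Asymptotics ProbabilityTheory

theorem hasDerivAt_integral_Iic {E : Type*} [NormedAddCommGroup E] [NormedSpace ℝ E]
    [CompleteSpace E] {f : ℝ → E} {x b : ℝ} (hf : IntegrableOn f (Iic b)) (hxb : x < b)
    (hfx : ContinuousAt f x) : HasDerivAt (fun y => ∫ t in Iic y, f t) (f x) x := by
  have hfm : StronglyMeasurableAtFilter f (𝓝 x) :=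
    ⟨Iic b, Iic_mem_nhds hxb, hf.aestronglyMeasurable⟩
  have hderiv : HasDerivAt (fun y => (∫ t in Iic x, f t) + ∫ t in x..y, f t) (f x) x :=
    (intervalIntegral.integral_hasDerivAt_right .refl hfm hfx).const_add _
  refine hderiv.congr_of_eventuallyEq ?_
  filter_upwards [Iic_mem_nhds hxb] with y hyb
  rw [← intervalIntegral.integral_Iic_sub_Iic (hf.mono_set (Iic_subset_Iic.2 hxb.le))
    (hf.mono_set (Iic_subset_Iic.2 hyb)), add_sub_cancel]

-- The case `r = id` is the asymptotic of Mills' ratio for the standard normal distribution.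
theorem isEquivalent_div_of_hasDerivAt {Q f r r' : ℝ → ℝ}
    (hQ : ∀ᶠ x in atTop, HasDerivAt Q (-f x) x)
    (hf : ∀ᶠ x in atTop, HasDerivAt f (-(r x * f x)) x)
    (hr : ∀ᶠ x in atTop, HasDerivAt r (r' x) x)
    (hf_ne : ∀ᶠ x in atTop, f x ≠ 0) (hr_ne : ∀ᶠ x in atTop, r x ≠ 0)
    (hQ_lim : Tendsto Q atTop (𝓝 0)) (hfr_lim : Tendsto (fun x => f x / r x) atTop (𝓝 0))
    (hr_lim : Tendsto (fun x => r' x / r x ^ 2) atTop (𝓝 0)) :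
    Q ~[atTop] fun x => f x / r x := by
  have hlim : Tendsto (fun x => 1 + r' x / r x ^ 2) atTop (𝓝 1) := by
    simpa using hr_lim.const_add 1
  have hlim_ne : ∀ᶠ x in atTop, 1 + r' x / r x ^ 2 ≠ 0 := hlim.eventually_ne one_ne_zero
  refine isEquivalent_of_tendsto_one (HasDerivAt.lhopital_zero_atTop hQ
    (g' := fun x => -f x * (1 + r' x / r x ^ 2)) ?_ ?_ hQ_lim hfr_lim ?_)
  · filter_upwards [hf, hr, hr_ne] with x hfx hrx hrx_ne
    refine (hfx.div hrx hrx_ne).congr_deriv ?_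
    field_simp
    ring
  · filter_upwards [hf_ne, hlim_ne] with x hfx hx
    exact mul_ne_zero (neg_ne_zero.2 hfx) hx
  · have hinv : Tendsto (fun x => (1 + r' x / r x ^ 2)⁻¹) atTop (𝓝 1) := by
      simpa using hlim.inv₀ one_ne_zero
    refine hinv.congr' ?_
    filter_upwards [hf_ne] with x hfx
    rw [div_mul_cancel_left₀ (neg_ne_zero.2 hfx)]

theorem isEquivalent_sqrt {α : Type*} {l : Filter α} {u v : α → ℝ} (h : u ~[l] v) :
    (fun x => √(u x)) ~[l] fun x => √(v x) := by
  obtain ⟨c, hc, hcv⟩ := h.exists_eq_mul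
  have hc_sqrt : Tendsto (fun x => √(c x)) l (𝓝 1) := by
    simpa only [sqrt_one] using hc.sqrt
  refine isEquivalent_iff_exists_eq_mul.2 ⟨fun x => √(c x), hc_sqrt, ?_⟩
  filter_upwards [hcv, hc.eventually_const_le zero_lt_one] with x hx hcx
  simp only [hx, Pi.mul_apply, sqrt_mul hcx]

theorem stdNormalPDF_eq_gaussianPDFReal : stdNormalPDF = gaussianPDFReal 0 1 := by
  ext x
  simp [stdNormalPDF, gaussianPDFReal, div_eq_inv_mul]

theorem stdNormalPDF_pos (x : ℝ) : 0 < stdNormalPDF x := by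
  unfold stdNormalPDF
  positivity

theorem integrable_stdNormalPDF : Integrable stdNormalPDF :=
  stdNormalPDF_eq_gaussianPDFReal ▸ integrable_gaussianPDFReal 0 1

theorem hasDerivAt_stdNormalPDF (x : ℝ) : HasDerivAt stdNormalPDF (-(x * stdNormalPDF x)) x := by
  have hexponent : HasDerivAt (fun y : ℝ => -y ^ 2 / 2) (-x) x :=
    ((hasDerivAt_pow 2 x).neg.div_const 2).congr_deriv (by push_cast; ring)
  refine (hexponent.exp.div_const (√(2 * π))).congr_deriv ?_
  simp only [stdNormalPDF]
  ring

theorem tendsto_stdNormalPDF_atTop : Tendsto stdNormalPDF atTop (𝓝 0) := by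
  have hexponent : Tendsto (fun x : ℝ => -x ^ 2 / 2) atTop atBot :=
    (tendsto_neg_atTop_atBot.comp (tendsto_pow_atTop two_ne_zero)).atBot_div_const two_pos
  rw [← zero_div √(2 * π)]
  exact (tendsto_exp_atBot.comp hexponent).div_const _

theorem tendsto_stdNormalPDF_div_atTop : Tendsto (fun x => stdNormalPDF x / x) atTop (𝓝 0) :=
  tendsto_stdNormalPDF_atTop.div_atTop tendsto_id

theorem log_stdNormalPDF (x : ℝ) : log (stdNormalPDF x) = -x ^ 2 / 2 - log √(2 * π) := by
  rw [stdNormalPDF, log_div (exp_ne_zero _) (by positivity), log_exp]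

theorem stdNormalCDF_eq_cdf_gaussianReal : stdNormalCDF = cdf (gaussianReal 0 1) := by
  ext x
  have hnonneg : 0 ≤ ∫ t in Iic x, gaussianPDFReal 0 1 t :=
    integral_nonneg (gaussianPDFReal_nonneg 0 1)
  change ∫ t in Iic x, stdNormalPDF t = _
  rw [stdNormalPDF_eq_gaussianPDFReal, cdf_eq_real, measureReal_def,
    gaussianReal_apply_eq_integral 0 one_ne_zero, ENNReal.toReal_ofReal hnonneg]

theorem hasDerivAt_stdNormalCDF (x : ℝ) : HasDerivAt stdNormalCDF (stdNormalPDF x) x :=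
  hasDerivAt_integral_Iic integrable_stdNormalPDF.integrableOn (lt_add_one x)
    (hasDerivAt_stdNormalPDF x).continuousAt

theorem continuous_stdNormalCDF : Continuous stdNormalCDF :=
  continuous_iff_continuousAt.2 fun x => (hasDerivAt_stdNormalCDF x).continuousAt

theorem strictMono_stdNormalCDF : StrictMono stdNormalCDF :=
  strictMono_of_hasDerivAt_pos hasDerivAt_stdNormalCDF stdNormalPDF_pos

theorem tendsto_stdNormalCDF_atTop : Tendsto stdNormalCDF atTop (𝓝 1) :=
  stdNormalCDF_eq_cdf_gaussianReal ▸ tendsto_cdf_atTop _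

theorem tendsto_stdNormalCDF_atBot : Tendsto stdNormalCDF atBot (𝓝 0) :=
  stdNormalCDF_eq_cdf_gaussianReal ▸ tendsto_cdf_atBot _

theorem stdNormalCDF_pos (x : ℝ) : 0 < stdNormalCDF x :=
  (strictMono_stdNormalCDF.monotone.le_of_tendsto tendsto_stdNormalCDF_atBot (x - 1)).trans_lt
    (strictMono_stdNormalCDF (sub_one_lt x))

theorem stdNormalCDF_lt_one (x : ℝ) : stdNormalCDF x < 1 :=
  (strictMono_stdNormalCDF (lt_add_one x)).trans_le
    (strictMono_stdNormalCDF.monotone.ge_of_tendsto tendsto_stdNormalCDF_atTop (x + 1))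

theorem stdNormalQuantile_stdNormalCDF (x : ℝ) : stdNormalQuantile (stdNormalCDF x) = x := by
  simp only [stdNormalQuantile, strictMono_stdNormalCDF.le_iff_le]
  exact csInf_Ici

theorem stdNormalCDF_stdNormalQuantile {u : ℝ} (hu : u ∈ Ioo 0 1) :
    stdNormalCDF (stdNormalQuantile u) = u := by
  obtain ⟨x, rfl⟩ : u ∈ range stdNormalCDF := mem_range_of_exists_le_of_exists_ge
    continuous_stdNormalCDF
    (tendsto_stdNormalCDF_atBot.eventually_le_const hu.1).exists
    (tendsto_stdNormalCDF_atTop.eventually_const_le hu.2).exists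
  rw [stdNormalQuantile_stdNormalCDF]

theorem tendsto_stdNormalQuantile_nhdsLT_one : Tendsto stdNormalQuantile (𝓝[<] 1) atTop := by
  refine tendsto_atTop.2 fun M => ?_
  filter_upwards [Ioo_mem_nhdsLT (stdNormalCDF_lt_one M)] with u ⟨hMu, hu⟩
  refine strictMono_stdNormalCDF.le_iff_le.1 ?_
  rw [stdNormalCDF_stdNormalQuantile ⟨(stdNormalCDF_pos M).trans hMu, hu⟩]
  exact hMu.le

theorem tendsto_stdNormalQuantile_one_sub :
    Tendsto (fun a => stdNormalQuantile (1 - a)) (𝓝[>] 0) atTop := by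
  have hone_sub : Tendsto (fun a : ℝ => 1 - a) (𝓝[>] 0) (𝓝[<] 1) := by
    have hcont : ContinuousWithinAt (fun a : ℝ => 1 - a) (Ioi 0) 0 := by fun_prop
    have hmaps : MapsTo (fun a : ℝ => 1 - a) (Ioi 0) (Iio 1) := fun a ha => sub_lt_self (1 : ℝ) ha
    simpa only [sub_zero] using hcont.tendsto_nhdsWithin hmaps
  exact tendsto_stdNormalQuantile_nhdsLT_one.comp hone_sub

theorem one_sub_stdNormalCDF_stdNormalQuantile_one_sub {a : ℝ} (ha : a ∈ Ioo 0 1) :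
    1 - stdNormalCDF (stdNormalQuantile (1 - a)) = a := by
  rw [stdNormalCDF_stdNormalQuantile (Ioo.one_sub_mem ha), sub_sub_cancel]

theorem isEquivalent_one_sub_stdNormalCDF :
    (fun x => 1 - stdNormalCDF x) ~[atTop] fun x => stdNormalPDF x / x := by
  have hQ_lim : Tendsto (fun x => 1 - stdNormalCDF x) atTop (𝓝 0) := by
    simpa using tendsto_stdNormalCDF_atTop.const_sub 1
  have hr_lim : Tendsto (fun x : ℝ => 1 / x ^ 2) atTop (𝓝 0) :=
    (tendsto_pow_atTop two_ne_zero).const_div_atTop 1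
  exact isEquivalent_div_of_hasDerivAt
    (.of_forall fun x => (hasDerivAt_stdNormalCDF x).const_sub 1)
    (.of_forall hasDerivAt_stdNormalPDF) (.of_forall hasDerivAt_id)
    (.of_forall fun x => (stdNormalPDF_pos x).ne') (eventually_ne_atTop 0)
    hQ_lim tendsto_stdNormalPDF_div_atTop hr_lim

theorem isEquivalent_log_div_stdNormalPDF :
    (fun x => log (x / stdNormalPDF x)) ~[atTop] fun x => x ^ 2 / 2 := by
  have hlog : log =o[atTop] fun x : ℝ => x ^ 2 / 2 := by
    simpa [div_eq_inv_mul] using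
      (isLittleO_log_rpow_atTop two_pos).const_mul_right (inv_ne_zero two_ne_zero)
  have hconst : (fun _ => log √(2 * π)) =o[atTop] fun x : ℝ => x ^ 2 / 2 :=
    isLittleO_const_log_atTop.trans hlog
  refine ((IsEquivalent.refl.add_isLittleO hconst).add_isLittleO hlog).congr_left ?_
  filter_upwards [eventually_ne_atTop 0] with x hx
  rw [log_div hx (stdNormalPDF_pos x).ne', log_stdNormalPDF]
  simp only [Pi.add_apply]
  ring

theorem isEquivalent_log_inv_one_sub_stdNormalCDF :
    (fun x => log (1 - stdNormalCDF x)⁻¹) ~[atTop] fun x => x ^ 2 / 2 := by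
  have hinv : (fun x => (1 - stdNormalCDF x)⁻¹) ~[atTop] fun x => x / stdNormalPDF x := by
    simpa only [Pi.inv_def, inv_div] using isEquivalent_one_sub_stdNormalCDF.inv
  have hinv_lim : Tendsto (fun x => x / stdNormalPDF x) atTop atTop := by
    have hpos : ∀ᶠ x in atTop, 0 < stdNormalPDF x / x := by
      filter_upwards [eventually_gt_atTop 0] with x hx using div_pos (stdNormalPDF_pos x) hx
    simpa only [Pi.inv_def, inv_div] using
      (tendsto_nhdsWithin_iff.2 ⟨tendsto_stdNormalPDF_div_atTop, hpos⟩).inv_tendsto_nhdsGT_zero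
  exact (hinv.log hinv_lim).trans isEquivalent_log_div_stdNormalPDF

theorem isEquivalent_hFun :
    hFun ~[𝓝[>] 0] fun a => stdNormalQuantile (1 - a) / √(2 * π) := by
  have hpdf : (fun x => stdNormalPDF x / (1 - stdNormalCDF x)) ~[atTop] id := by
    refine (IsEquivalent.refl.div isEquivalent_one_sub_stdNormalCDF).congr_right ?_
    filter_upwards with x
    exact div_div_cancel₀ (stdNormalPDF_pos x).ne'
  refine ((hpdf.comp_tendsto tendsto_stdNormalQuantile_one_sub).div
    (IsEquivalent.refl (u := fun _ => √(2 * π)))).congr_left ?_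
  filter_upwards [Ioo_mem_nhdsGT one_pos] with a ha
  simp only [Pi.div_apply, Function.comp_apply, hFun, div_div,
    one_sub_stdNormalCDF_stdNormalQuantile_one_sub ha]

theorem isEquivalent_log_one_div_stdNormalQuantile_sq :
    (fun a => log (1 / a)) ~[𝓝[>] 0] fun a => stdNormalQuantile (1 - a) ^ 2 / 2 := by
  refine (isEquivalent_log_inv_one_sub_stdNormalCDF.comp_tendsto
    tendsto_stdNormalQuantile_one_sub).congr_left ?_
  filter_upwards [Ioo_mem_nhdsGT one_pos] with a ha
  simp only [Function.comp_apply, one_sub_stdNormalCDF_stdNormalQuantile_one_sub ha, one_div]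

theorem isEquivalent_sqrt_log_one_div_div_pi :
    (fun a => √(log (1 / a) / π)) ~[𝓝[>] 0] fun a => stdNormalQuantile (1 - a) / √(2 * π) := by
  have hsq : (fun a => log (1 / a) / π) ~[𝓝[>] 0]
      fun a => stdNormalQuantile (1 - a) ^ 2 / (2 * π) := by
    simpa only [Pi.div_def, div_div] using
      isEquivalent_log_one_div_stdNormalQuantile_sq.div (IsEquivalent.refl (u := fun _ => π))
  refine (isEquivalent_sqrt hsq).congr_right ?_
  filter_upwards [tendsto_stdNormalQuantile_one_sub.eventually_ge_atTop 0] with a ha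
  rw [sqrt_div (sq_nonneg _), sqrt_sq ha]

/-- As α → 0⁺, h(α) ~ √(log(1/α)/π). -/
theorem hFun_asymptotics :
    Filter.Tendsto (fun a : ℝ => hFun a / Real.sqrt (Real.log (1 / a) / Real.pi))
      (nhdsWithin 0 (Set.Ioi 0)) (nhds 1) := by
  have hequiv : hFun ~[𝓝[>] 0] fun a => √(log (1 / a) / π) :=
    isEquivalent_hFun.trans isEquivalent_sqrt_log_one_div_div_pi.symm
  have hne : ∀ᶠ a in 𝓝[>] 0, √(log (1 / a) / π) ≠ 0 := by
    filter_upwards [Ioo_mem_nhdsGT one_pos] with a ⟨ha_pos, ha_lt⟩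
    have hlog : 0 < log (1 / a) := log_pos (one_lt_one_div ha_pos ha_lt)
    positivity
  exact (isEquivalent_iff_tendsto_one hne).1 hequiv
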